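/- A skew-symmetric matrix A of size n×n over a field of characteristic zero has rank < 2k if and only if all Pfaffians of its principal 2k×2k submatrices vanish. -/

import Mathlib

open Matrix

/-- The even index `2i` in `Fin (2*n)`. -/
def evenIdx {n : ℕ} (i : Fin n) : Fin (2 * n) := ⟨2 * i.val, by have := i.isLt; omega⟩

/-- The odd index `2i+1` in `Fin (2*n)`. -/
def oddIdx {n : ℕ} (i : Fin n) : Fin (2 * n) := ⟨2 * i.val + 1, by have := i.isLt; omega⟩

/-- The Pfaffian of a `2n × 2n` matrix over a commutative ring, defined as the signed sum
over perfect matchings of `{0, …, 2n-1}` of the products of the corresponding entries. -/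
def pfaffian {R : Type*} [CommRing R] {n : ℕ} (A : Matrix (Fin (2 * n)) (Fin (2 * n)) R) : R :=
  ∑ σ ∈ Finset.univ.filter (fun σ : Equiv.Perm (Fin (2 * n)) =>
      (∀ i : Fin n, σ (evenIdx i) < σ (oddIdx i)) ∧
      ∀ i j : Fin n, i < j → σ (evenIdx i) < σ (evenIdx j)),
    (Equiv.Perm.sign σ : ℤ) • ∏ i : Fin n, A (σ (evenIdx i)) (σ (oddIdx i))

/-!
The Pfaffian of a congruent matrix `Pᵀ * A * P` satisfies a Cauchy–Binet formula: it is the sum over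
increasing `f` of `det P_f * pfaffian A_f`. Indeed, for skew-symmetric `B` the sum of
`± ∏ i, B (σ (2i)) (σ (2i+1))` over *all* permutations `σ` is `2 ^ n * n!` times the Pfaffian, and
this sum is expanded as in the Cauchy–Binet formula for determinants; the factor `2 ^ n * n!` is
cancelled over `ℤ[X_a : a ∈ R]`, from which the identity descends to every commutative ring `R`.

Now let `A` be alternating over a field, with symplectic normal form `Qᵀ * A * Q = J_r` and
`A = Pᵀ * J_r * P`, so that `A` has rank `2r`. A principal submatrix of `A` of size `2k` is itself
of the form `P'ᵀ * J_r * P'`, so its Pfaffian is an empty sum if `r < k`. If `k ≤ r`, then taking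
`k` of the hyperbolic pairs of `Q` exhibits `1 = pfaffian J_k` as a combination of the Pfaffians of
the principal submatrices of `A` of size `2k`, so that they cannot all vanish.
-/

open scoped Kronecker

section BlockPermutations

variable {n : ℕ}

/-- The permutation of `Fin n × Fin 2` which permutes the blocks `{i} × Fin 2` by `h.1` and then
permutes the elements inside each block `i` by `h.2 i`. These permutations form the hyperoctahedral
group, the stabilizer of the perfect matching `{(i, 0), (i, 1)}`. -/
def blockPerm (h : Equiv.Perm (Fin n) × (Fin n → Equiv.Perm (Fin 2))) :
    Equiv.Perm (Fin n × Fin 2) :=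
  Equiv.prodCongrRight h.2 * Equiv.prodCongrLeft fun _ => h.1

lemma blockPerm_apply (h : Equiv.Perm (Fin n) × (Fin n → Equiv.Perm (Fin 2))) (i : Fin n)
    (b : Fin 2) : blockPerm h (i, b) = (h.1 i, h.2 (h.1 i) b) := rfl

lemma sign_blockPerm (h : Equiv.Perm (Fin n) × (Fin n → Equiv.Perm (Fin 2))) :
    Equiv.Perm.sign (blockPerm h) = ∏ i, Equiv.Perm.sign (h.2 i) := by
  rw [blockPerm, Equiv.Perm.sign_mul, Equiv.Perm.sign_prodCongrRight,
    Equiv.Perm.sign_prodCongrLeft]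
  simp

lemma perm_fin_two_eq_one_or_eq_swap (ε : Equiv.Perm (Fin 2)) : ε = 1 ∨ ε = Equiv.swap 0 1 := by
  decide +revert

variable {L : Type*} [LinearOrder L]

lemma existsUnique_perm_fin_two_lt {t : Fin 2 → L} (ht : Function.Injective t) :
    ∃! ε : Equiv.Perm (Fin 2), t (ε 0) < t (ε 1) := by
  rcases lt_or_gt_of_ne (ht.ne zero_ne_one) with h | h
  · refine ⟨1, by simpa using h, fun ε hε => ?_⟩
    rcases perm_fin_two_eq_one_or_eq_swap ε with rfl | rfl
    · rfl
    · exact absurd h (by simpa using hε.le)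
  · refine ⟨Equiv.swap 0 1, by simpa using h, fun ε hε => ?_⟩
    rcases perm_fin_two_eq_one_or_eq_swap ε with rfl | rfl
    · exact absurd h (by simpa using hε.le)
    · rfl

/-- A labelling of `Fin n × Fin 2` is normalized if it lists the perfect matching
`{s (i, 0), s (i, 1)}` with increasing pairs, ordered by their first entries. This is the condition
on `σ` in the definition of `pfaffian`. -/
def IsNormalized (s : Fin n × Fin 2 → L) : Prop :=
  (∀ i, s (i, 0) < s (i, 1)) ∧ ∀ i j, i < j → s (i, 0) < s (j, 0)

lemma existsUnique_isNormalized_comp_blockPerm {s : Fin n × Fin 2 → L}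
    (hs : Function.Injective s) : ∃! h, IsNormalized (s ∘ blockPerm h) := by
  have hε (i : Fin n) : ∃! ε : Equiv.Perm (Fin 2), s (i, ε 0) < s (i, ε 1) :=
    existsUnique_perm_fin_two_lt (hs.comp (Prod.mk_right_injective i))
  choose ε hε hε_unique using hε
  have hinj : Function.Injective fun i => s (i, ε i 0) := fun i j hij =>
    congrArg Prod.fst (hs hij)
  refine ⟨(Tuple.sort fun i => s (i, ε i 0), ε), ⟨fun i => hε _, fun i j hij => ?_⟩, ?_⟩
  · exact (Tuple.monotone_sort fun i => s (i, ε i 0)).strictMono_of_injective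
      (hinj.comp (Equiv.injective _)) hij
  · rintro ⟨π, ε'⟩ ⟨hpair, hblock⟩
    obtain rfl : ε' = ε := funext fun i => hε_unique _ _ <| by
      simpa [blockPerm_apply] using hpair (π.symm i)
    have hmono : StrictMono ((fun i => s (i, ε' i 0)) ∘ π) := hblock
    have hsort := Tuple.unique_monotone hmono.monotone (Tuple.monotone_sort _)
    exact congrArg (·, ε') (Equiv.ext fun i => hinj (congrFun hsort i))

end BlockPermutations

section MatchingSum

variable {R : Type*} [CommRing R] {n : ℕ}

/-- The term `± ∏ i, B (σ (i, 0)) (σ (i, 1))` contributed to the Pfaffian of `B` by the perfect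
matching `{σ (i, 0), σ (i, 1)}`. -/
def matchingTerm (B : Matrix (Fin n × Fin 2) (Fin n × Fin 2) R)
    (σ : Equiv.Perm (Fin n × Fin 2)) : R :=
  (Equiv.Perm.sign σ : ℤ) • ∏ i, B (σ (i, 0)) (σ (i, 1))

lemma apply_perm_fin_two_of_transpose_eq_neg {ι : Type*} {B : Matrix ι ι R} (hB : Bᵀ = -B)
    (t : Fin 2 → ι) (ε : Equiv.Perm (Fin 2)) :
    B (t (ε 0)) (t (ε 1)) = ((Equiv.Perm.sign ε : ℤ) : R) * B (t 0) (t 1) := by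
  rcases perm_fin_two_eq_one_or_eq_swap ε with rfl | rfl
  · simp
  · simpa [Equiv.Perm.sign_swap] using congrFun₂ hB (t 0) (t 1)

lemma matchingTerm_mul_blockPerm {B : Matrix (Fin n × Fin 2) (Fin n × Fin 2) R} (hB : Bᵀ = -B)
    (σ : Equiv.Perm (Fin n × Fin 2)) (h : Equiv.Perm (Fin n) × (Fin n → Equiv.Perm (Fin 2))) :
    matchingTerm B (σ * blockPerm h) = matchingTerm B σ := by
  have hprod : ∏ i, B ((σ * blockPerm h) (i, 0)) ((σ * blockPerm h) (i, 1)) =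
      ((Equiv.Perm.sign (blockPerm h) : ℤ) : R) * ∏ i, B (σ (i, 0)) (σ (i, 1)) := by
    simp only [Equiv.Perm.mul_apply, blockPerm_apply]
    rw [Equiv.prod_comp h.1 fun i => B (σ (i, h.2 i 0)) (σ (i, h.2 i 1)), sign_blockPerm]
    simp only [fun i => apply_perm_fin_two_of_transpose_eq_neg hB (fun b => σ (i, b)) (h.2 i),
      Finset.prod_mul_distrib, Units.coe_prod, Int.cast_prod]
  rw [matchingTerm, matchingTerm, hprod, ← zsmul_eq_mul, smul_smul, Equiv.Perm.sign_mul,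
    ← Units.val_mul, mul_assoc, Int.units_mul_self, mul_one]

/-- The bijection `(i, b) ↦ 2 * i + b`, under which `(i, 0)` and `(i, 1)` correspond to
`evenIdx i` and `oddIdx i`. -/
def pairEquiv (n : ℕ) : Fin n × Fin 2 ≃ Fin (2 * n) :=
  finProdFinEquiv.trans (finCongr (mul_comm n 2))

lemma pairEquiv_zero (i : Fin n) : pairEquiv n (i, 0) = evenIdx i := by
  ext; simp [pairEquiv, evenIdx]

lemma pairEquiv_one (i : Fin n) : pairEquiv n (i, 1) = oddIdx i := by
  ext; simp [pairEquiv, oddIdx, add_comm]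

lemma pairEquiv_lt_pairEquiv_iff {p q : Fin n × Fin 2} :
    pairEquiv n p < pairEquiv n q ↔ p.1 < q.1 ∨ p.1 = q.1 ∧ p.2 < q.2 := by
  simp only [pairEquiv, Equiv.trans_apply, finCongr_apply, Fin.lt_def, Fin.val_cast,
    finProdFinEquiv_apply_val, Fin.ext_iff]
  omega

open Classical in
lemma pfaffian_eq_sum_isNormalized (B : Matrix (Fin (2 * n)) (Fin (2 * n)) R) :
    pfaffian B = ∑ σ : Equiv.Perm (Fin n × Fin 2), if IsNormalized (pairEquiv n ∘ σ) then
      matchingTerm (B.submatrix (pairEquiv n) (pairEquiv n)) σ else 0 := by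
  rw [pfaffian, Finset.sum_filter]
  refine (Fintype.sum_equiv (pairEquiv n).permCongr _ _ fun σ => ?_).symm
  simp only [IsNormalized, matchingTerm, submatrix_apply, Function.comp_apply,
    Equiv.permCongr_apply, ← pairEquiv_zero, ← pairEquiv_one, Equiv.symm_apply_apply,
    Equiv.Perm.sign_permCongr]
  congr

open Classical in
-- Every left coset of the group of block permutations contains exactly one normalized permutation.
lemma sum_matchingTerm_submatrix_pairEquiv {B : Matrix (Fin (2 * n)) (Fin (2 * n)) R}
    (hB : Bᵀ = -B) : ∑ σ, matchingTerm (B.submatrix (pairEquiv n) (pairEquiv n)) σ =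
      Fintype.card (Equiv.Perm (Fin n) × (Fin n → Equiv.Perm (Fin 2))) • pfaffian B := by
  set F := matchingTerm (B.submatrix (pairEquiv n) (pairEquiv n))
  have hF (σ h) : F (σ * blockPerm h) = F σ :=
    matchingTerm_mul_blockPerm (by rw [transpose_submatrix, hB]; rfl) σ h
  calc ∑ σ, F σ
    _ = ∑ σ : Equiv.Perm (Fin n × Fin 2), ∑ h,
        if IsNormalized ((pairEquiv n ∘ σ) ∘ blockPerm h) then F σ else 0 := by
      refine Finset.sum_congr rfl fun σ _ => ?_
      obtain ⟨h, hh, h_unique⟩ := existsUnique_isNormalized_comp_blockPerm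
        ((pairEquiv n).injective.comp σ.injective)
      rw [Fintype.sum_eq_single h fun h' hne => if_neg fun hn => hne (h_unique h' hn), if_pos hh]
    _ = ∑ h, ∑ σ : Equiv.Perm (Fin n × Fin 2),
        if IsNormalized (pairEquiv n ∘ (σ * blockPerm h : Equiv.Perm _)) then
          F (σ * blockPerm h) else 0 := by
      rw [Finset.sum_comm]
      simp only [hF]
      rfl
    _ = ∑ _ : Equiv.Perm (Fin n) × (Fin n → Equiv.Perm (Fin 2)), pfaffian B := by
      refine Finset.sum_congr rfl fun h _ => ?_
      rw [pfaffian_eq_sum_isNormalized]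
      exact Equiv.sum_comp (Equiv.mulRight (blockPerm h))
        fun σ => if IsNormalized (pairEquiv n ∘ σ) then F σ else 0
    _ = _ := by rw [Finset.sum_const, Finset.card_univ]

end MatchingSum

section CauchyBinet

lemma sum_eq_sum_orderEmbedding_sum_perm {ι α M : Type*} [Fintype ι] [LinearOrder ι]
    [Fintype α] [DecidableEq α] [AddCommMonoid M] {m : ℕ} (e : α ≃ Fin m) (F : (α → ι) → M)
    (hF : ∀ g, ¬ Function.Injective g → F g = 0) :
    ∑ g, F g = ∑ f : Fin m ↪o ι, ∑ σ : Equiv.Perm α, F (f ∘ e ∘ σ) := by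
  rw [← Fintype.sum_prod_type']
  refine (Fintype.sum_of_injective
    (fun x : (Fin m ↪o ι) × Equiv.Perm α => x.1 ∘ e ∘ x.2) ?_ _ _ ?_ fun _ => rfl).symm
  · rintro ⟨f, σ⟩ ⟨f', σ'⟩ h
    obtain rfl : f = f' := OrderEmbedding.range_inj.mp <| by
      simpa [EquivLike.range_comp, ← Function.comp_assoc] using congrArg Set.range h
    exact congrArg (f, ·) (Equiv.ext fun a => e.injective (f.injective (congrFun h a)))
  · refine fun g hg => hF g fun hinj => hg ?_
    set τ := Tuple.sort (g ∘ e.symm)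
    have hmono : StrictMono ((g ∘ e.symm) ∘ τ) :=
      (Tuple.monotone_sort _).strictMono_of_injective
        ((hinj.comp e.symm.injective).comp τ.injective)
    exact ⟨(OrderEmbedding.ofStrictMono _ hmono, e.symm.permCongr τ⁻¹), by
      ext a; simp [Equiv.permCongr_apply]⟩

variable {R : Type*} [CommRing R] {ι : Type*} [Fintype ι] {n : ℕ}

lemma sum_matchingTerm_transpose_mul_mul (A : Matrix ι ι R) (P : Matrix ι (Fin n × Fin 2) R) :
    ∑ σ, matchingTerm (Pᵀ * A * P) σ = ∑ g : Fin n × Fin 2 → ι,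
      (∏ i, A (g (i, 0)) (g (i, 1))) * (P.submatrix g id).det := by
  classical
  have hentry (p q : Fin n × Fin 2) :
      (Pᵀ * A * P) p q = ∑ t : Fin 2 → ι, A (t 0) (t 1) * (P (t 0) p * P (t 1) q) := by
    rw [← (finTwoArrowEquiv ι).symm.sum_comp, Fintype.sum_prod_type, Finset.sum_comm]
    simp only [mul_apply, Finset.sum_mul, transpose_apply, finTwoArrowEquiv_symm_apply,
      cons_val_zero, cons_val_one]
    exact Finset.sum_congr rfl fun b _ => Finset.sum_congr rfl fun a _ => by ring
  have hprod (σ : Equiv.Perm (Fin n × Fin 2)) :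
      ∏ i, (Pᵀ * A * P) (σ (i, 0)) (σ (i, 1)) = ∑ g : Fin n × Fin 2 → ι,
        (∏ i, A (g (i, 0)) (g (i, 1))) * ∏ p, P (g p) (σ p) := by
    simp only [hentry, Finset.prod_univ_sum, Fintype.piFinset_univ]
    rw [← (Equiv.curry (Fin n) (Fin 2) ι).sum_comp]
    refine Finset.sum_congr rfl fun g _ => ?_
    rw [Finset.prod_mul_distrib, Fintype.prod_prod_type]
    simp [Fin.prod_univ_two]
  simp only [matchingTerm, hprod, Finset.smul_sum]
  rw [Finset.sum_comm]
  refine Finset.sum_congr rfl fun g _ => ?_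
  rw [← det_transpose, det_apply', Finset.mul_sum]
  refine Finset.sum_congr rfl fun σ _ => ?_
  simp only [zsmul_eq_mul, transpose_apply, submatrix_apply, id_eq]
  ring

variable [LinearOrder ι]

lemma sum_matchingTerm_transpose_mul_mul_eq_sum_orderEmbedding {m : ℕ} (e : Fin n × Fin 2 ≃ Fin m)
    (A : Matrix ι ι R) (P : Matrix ι (Fin n × Fin 2) R) :
    ∑ σ, matchingTerm (Pᵀ * A * P) σ = ∑ f : Fin m ↪o ι,
      (P.submatrix (f ∘ e) id).det * ∑ σ, matchingTerm (A.submatrix (f ∘ e) (f ∘ e)) σ := by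
  have hdet (g : Fin n × Fin 2 → ι) (hg : ¬ Function.Injective g) :
      (P.submatrix g id).det = 0 := by
    obtain ⟨p, q, hpq, hne⟩ := Function.not_injective_iff.mp hg
    exact det_zero_of_row_eq hne (by ext; simp [hpq])
  rw [sum_matchingTerm_transpose_mul_mul, sum_eq_sum_orderEmbedding_sum_perm e _
    fun g hg => by rw [hdet g hg, mul_zero]]
  refine Finset.sum_congr rfl fun f _ => ?_
  rw [Finset.mul_sum]
  refine Finset.sum_congr rfl fun σ _ => ?_
  have hperm : (P.submatrix (f ∘ e ∘ σ) id).det =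
      (Equiv.Perm.sign σ : ℤ) * (P.submatrix (f ∘ e) id).det :=
    det_permute σ (P.submatrix (f ∘ e) id)
  simp only [hperm, matchingTerm, zsmul_eq_mul, submatrix_apply, Function.comp_apply]
  ring

theorem pfaffian_transpose_mul_mul_of_isAddTorsionFree [IsAddTorsionFree R] {A : Matrix ι ι R}
    (hA : Aᵀ = -A) (P : Matrix ι (Fin (2 * n)) R) :
    pfaffian (Pᵀ * A * P) =
      ∑ f : Fin (2 * n) ↪o ι, (P.submatrix f id).det * pfaffian (A.submatrix f f) := by
  have hcongr : (Pᵀ * A * P)ᵀ = -(Pᵀ * A * P) := by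
    simp [transpose_mul, hA, Matrix.mul_assoc]
  have hsub (f : Fin (2 * n) ↪o ι) : (A.submatrix f f)ᵀ = -A.submatrix f f := by
    rw [transpose_submatrix, hA]; rfl
  apply nsmul_right_injective (Fintype.card_ne_zero
    (α := Equiv.Perm (Fin n) × (Fin n → Equiv.Perm (Fin 2))))
  dsimp only
  rw [← sum_matchingTerm_submatrix_pairEquiv hcongr, Finset.smul_sum]
  have hPAP : (Pᵀ * A * P).submatrix (pairEquiv n) (pairEquiv n) =
      (P.submatrix id (pairEquiv n))ᵀ * A * P.submatrix id (pairEquiv n) := rfl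
  rw [hPAP, sum_matchingTerm_transpose_mul_mul_eq_sum_orderEmbedding (pairEquiv n)]
  refine Finset.sum_congr rfl fun f _ => ?_
  rw [← mul_smul_comm, ← sum_matchingTerm_submatrix_pairEquiv (hsub f), submatrix_submatrix,
    submatrix_submatrix]
  congr 1
  exact det_submatrix_equiv_self (pairEquiv n) (P.submatrix f id)

end CauchyBinet

section AlternatingMatrix

variable {R S : Type*} [CommRing R] [CommRing S] {ι κ : Type*}

/-- A square matrix is alternating if it is skew-symmetric with zero diagonal, which is stronger
than skew-symmetry in characteristic two. -/
structure IsAlternating (A : Matrix ι ι R) : Prop where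
  transpose_eq_neg : Aᵀ = -A
  apply_self : ∀ i, A i i = 0

lemma isAlternating_of_transpose_eq_neg [IsAddTorsionFree R] {A : Matrix ι ι R} (hA : Aᵀ = -A) :
    IsAlternating A :=
  ⟨hA, fun i => self_eq_neg.mp (congrFun₂ hA i i)⟩

namespace IsAlternating

lemma dotProduct_mulVec_self [Fintype ι] {A : Matrix ι ι R} (hA : IsAlternating A) (v : ι → R) :
    v ⬝ᵥ A *ᵥ v = 0 := by
  simp only [dotProduct, mulVec, Finset.mul_sum]
  rw [← Fintype.sum_prod_type']
  refine Finset.sum_involution (fun p _ => p.swap) (fun p _ => ?_) (fun p _ hp hswap => hp ?_)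
    (fun _ _ => Finset.mem_univ _) fun p _ => p.swap_swap
  · have hskew : A p.2 p.1 = -A p.1 p.2 := congrFun₂ hA.transpose_eq_neg p.1 p.2
    simp only [Prod.fst_swap, Prod.snd_swap, hskew]
    ring
  · rw [show p.2 = p.1 from congrArg Prod.fst hswap, hA.apply_self, zero_mul, mul_zero]

lemma transpose_mul_mul [Fintype ι] {A : Matrix ι ι R} (hA : IsAlternating A)
    (P : Matrix ι κ R) : IsAlternating (Pᵀ * A * P) where
  transpose_eq_neg := by simp [transpose_mul, hA.transpose_eq_neg, Matrix.mul_assoc]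
  apply_self j := by
    rw [Matrix.mul_assoc]
    exact hA.dotProduct_mulVec_self fun i => P i j

lemma exists_map_eq [LinearOrder ι] {A : Matrix ι ι R} (hA : IsAlternating A) {φ : S →+* R}
    (hφ : Function.Surjective φ) : ∃ B : Matrix ι ι S, IsAlternating B ∧ B.map φ = A := by
  choose ψ hψ using hφ
  refine ⟨of fun i j => if i < j then ψ (A i j) else if j < i then -ψ (A j i) else 0,
    ⟨?_, fun i => by simp⟩, ?_⟩
  · ext i j
    rcases lt_trichotomy i j with h | rfl | h
    · simp [h, h.not_gt]
    · simp
    · simp [h, h.not_gt]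
  · ext i j
    have hskew : A j i = -A i j := congrFun₂ hA.transpose_eq_neg i j
    rcases lt_trichotomy i j with h | rfl | h
    · simp [h, hψ]
    · simp [hA.apply_self]
    · simp [h, h.not_gt, hψ, hskew]

end IsAlternating

lemma map_pfaffian (φ : R →+* S) {n : ℕ} (A : Matrix (Fin (2 * n)) (Fin (2 * n)) R) :
    φ (pfaffian A) = pfaffian (A.map φ) := by
  simp [pfaffian]

theorem pfaffian_transpose_mul_mul [Fintype ι] [LinearOrder ι] {n : ℕ} {A : Matrix ι ι R}
    (hA : IsAlternating A) (P : Matrix ι (Fin (2 * n)) R) :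
    pfaffian (Pᵀ * A * P) =
      ∑ f : Fin (2 * n) ↪o ι, (P.submatrix f id).det * pfaffian (A.submatrix f f) := by
  -- Generic lifts of the entries live in a torsion-free ring, where one can cancel `2 ^ n * n!`.
  let φ : MvPolynomial R ℤ →+* R := (MvPolynomial.aeval id).toRingHom
  have hφ : Function.Surjective φ := fun a => ⟨MvPolynomial.X a, by simp [φ]⟩
  obtain ⟨B, hB, rfl⟩ := hA.exists_map_eq hφ
  obtain ⟨Q, rfl⟩ : ∃ Q : Matrix ι (Fin (2 * n)) (MvPolynomial R ℤ), Q.map φ = P :=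
    ⟨P.map (Function.surjInv hφ), by ext; simp [Function.surjInv_eq hφ]⟩
  have hCB := congrArg φ (pfaffian_transpose_mul_mul_of_isAddTorsionFree hB.transpose_eq_neg Q)
  simpa [map_pfaffian, RingHom.map_det, transpose_map, Matrix.map_mul, submatrix_map] using hCB

lemma pfaffian_transpose_mul_mul_eq_zero_of_card_lt [Fintype ι] {n : ℕ} {A : Matrix ι ι R}
    (hA : IsAlternating A) (P : Matrix ι (Fin (2 * n)) R) (hn : Fintype.card ι < 2 * n) :
    pfaffian (Pᵀ * A * P) = 0 := by
  let _ : LinearOrder ι := LinearOrder.lift' _ (Fintype.equivFin ι).injective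
  have : IsEmpty (Fin (2 * n) ↪o ι) :=
    ⟨fun f => by simpa using (Fintype.card_le_of_injective f f.injective).trans_lt hn⟩
  rw [pfaffian_transpose_mul_mul hA, Finset.univ_eq_empty, Finset.sum_empty]

end AlternatingMatrix

section SymplecticMatrix

variable (R : Type*) [CommRing R] (n : ℕ)

/-- The matrix of the standard symplectic form, with pairs of dual basis vectors indexed by
`(i, 0)` and `(i, 1)`. -/
def symplecticMatrix : Matrix (Fin n × Fin 2) (Fin n × Fin 2) R :=
  (1 : Matrix (Fin n) (Fin n) R) ⊗ₖ !![0, 1; -1, 0]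

variable {n}

lemma symplecticMatrix_apply (p q : Fin n × Fin 2) :
    symplecticMatrix R n p q = if p.1 = q.1 then !![0, 1; -1, 0] p.2 q.2 else 0 := by
  simp [symplecticMatrix, kroneckerMap_apply, one_apply]

variable (n)

lemma isAlternating_symplecticMatrix : IsAlternating (symplecticMatrix R n) where
  transpose_eq_neg := by
    ext ⟨i, b⟩ ⟨j, c⟩
    by_cases h : i = j <;> fin_cases b <;> fin_cases c <;>
      simp [symplecticMatrix_apply, h, eq_comm]
  apply_self := by
    rintro ⟨i, b⟩
    fin_cases b <;> simp [symplecticMatrix_apply]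

lemma symplecticMatrix_mul_self : symplecticMatrix R n * symplecticMatrix R n = -1 := by
  have hblock : (!![0, 1; -1, 0] * !![0, 1; -1, 0] : Matrix (Fin 2) (Fin 2) R) = -1 := by
    ext i j; fin_cases i <;> fin_cases j <;> simp
  rw [symplecticMatrix, ← mul_kronecker_mul, hblock, one_mul]
  ext ⟨i, b⟩ ⟨j, c⟩
  by_cases hij : i = j <;> by_cases hbc : b = c <;> simp [one_apply, hij, hbc]

lemma rank_symplecticMatrix [Nontrivial R] : (symplecticMatrix R n).rank = 2 * n := by
  have hunit : IsUnit (symplecticMatrix R n) := by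
    refine IsUnit.of_mul_eq_one (-symplecticMatrix R n) ?_
    rw [mul_neg, symplecticMatrix_mul_self, neg_neg]
  simp [rank_of_isUnit _ hunit, mul_comm]

variable {n}

lemma symplecticMatrix_submatrix_prodMap {m : ℕ} {f : Fin m → Fin n} (hf : Function.Injective f) :
    (symplecticMatrix R n).submatrix (Prod.map f id) (Prod.map f id) = symplecticMatrix R m := by
  ext p q
  simp [symplecticMatrix_apply, hf.eq_iff]

lemma eq_one_of_isNormalized_of_fst_eq {σ : Equiv.Perm (Fin n × Fin 2)}
    (hσ : IsNormalized (pairEquiv n ∘ σ)) (hfst : ∀ i, (σ (i, 0)).1 = (σ (i, 1)).1) : σ = 1 := by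
  have hlt (i : Fin n) : (σ (i, 0)).2 < (σ (i, 1)).2 := by
    simpa [pairEquiv_lt_pairEquiv_iff, hfst i] using hσ.1 i
  have hzero (i : Fin n) : (σ (i, 0)).2 = 0 := by have := hlt i; omega
  have hone (i : Fin n) : (σ (i, 1)).2 = 1 := by have := hlt i; omega
  have hmono : StrictMono fun i => (σ (i, 0)).1 := fun i j hij => by
    simpa [pairEquiv_lt_pairEquiv_iff, hzero] using hσ.2 i j hij
  have hid : (fun i => (σ (i, 0)).1) = id :=
    (hmono.range_inj strictMono_id).mp <| by
      rw [(Finite.surjective_of_injective hmono.injective).range_eq, Set.range_id]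
  ext1 ⟨i, b⟩
  fin_cases b
  · exact Prod.ext (congrFun hid i) (hzero i)
  · exact Prod.ext ((hfst i).symm.trans (congrFun hid i)) (hone i)

lemma pfaffian_symplecticMatrix :
    pfaffian ((symplecticMatrix R n).submatrix (pairEquiv n).symm (pairEquiv n).symm) = 1 := by
  classical
  have hnorm : IsNormalized (pairEquiv n ∘ (1 : Equiv.Perm (Fin n × Fin 2))) := by
    simp [IsNormalized, pairEquiv_lt_pairEquiv_iff]
  rw [pfaffian_eq_sum_isNormalized, submatrix_submatrix, Equiv.symm_comp_self, submatrix_id_id,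
    Fintype.sum_eq_single 1, if_pos hnorm]
  · simp [matchingTerm, symplecticMatrix_apply]
  · intro σ hσ
    split_ifs with hσ_norm
    · obtain ⟨i, hi⟩ : ∃ i, (σ (i, 0)).1 ≠ (σ (i, 1)).1 := by
        by_contra! hfst
        exact hσ (eq_one_of_isNormalized_of_fst_eq hσ_norm hfst)
      rw [matchingTerm, Finset.prod_eq_zero (Finset.mem_univ i), smul_zero]
      simp [symplecticMatrix_apply, hi]
    · rfl

end SymplecticMatrix

section NormalForm

lemma exists_mul_mul_eq_self_sub {R : Type*} [CommRing R] {ι : Type*} [Fintype ι]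
    {A : Matrix ι ι R} (hA : Aᵀ = -A) {r : ℕ} {Q : Matrix ι (Fin r × Fin 2) R}
    (hQ : Qᵀ * A * Q = symplecticMatrix R r) :
    ∃ S : Matrix ι ι R, Qᵀ * A * S = 0 ∧
      Sᵀ * A * S = A - (Qᵀ * A)ᵀ * symplecticMatrix R r * (Qᵀ * A) := by
  classical
  set J := symplecticMatrix R r
  have hS : Qᵀ * A * (1 + Q * J * (Qᵀ * A)) = 0 := calc
    _ = Qᵀ * A + (Qᵀ * A * Q) * J * (Qᵀ * A) := by
      rw [Matrix.mul_add, Matrix.mul_one]; simp only [Matrix.mul_assoc]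
    _ = 0 := by rw [hQ, symplecticMatrix_mul_self, Matrix.neg_mul, Matrix.one_mul, add_neg_cancel]
  -- This is the projection onto the `A`-orthogonal complement of the columns of `Q`.
  refine ⟨1 + Q * J * (Qᵀ * A), hS, ?_⟩
  calc (1 + Q * J * (Qᵀ * A))ᵀ * A * (1 + Q * J * (Qᵀ * A))
    _ = A * (1 + Q * J * (Qᵀ * A)) +
        (J * (Qᵀ * A))ᵀ * (Qᵀ * A * (1 + Q * J * (Qᵀ * A))) := by
      simp only [transpose_add, transpose_one, transpose_mul, Matrix.add_mul,
        Matrix.one_mul, Matrix.mul_assoc]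
    _ = A - (Qᵀ * A)ᵀ * J * (Qᵀ * A) := by
      rw [hS, Matrix.mul_zero, add_zero, Matrix.mul_add, Matrix.mul_one, transpose_mul, hA,
        transpose_transpose]
      simp [Matrix.mul_assoc, sub_eq_add_neg]

variable {K : Type*} [Field K] {ι : Type*} [Fintype ι]

namespace IsAlternating

lemma exists_hyperbolic_pair {A : Matrix ι ι K} (hA : IsAlternating A) (hA₀ : A ≠ 0) :
    ∃ E : Matrix ι (Fin 2) K, Eᵀ * A * E = !![0, 1; -1, 0] := by
  classical
  obtain ⟨p, q, hpq⟩ : ∃ p q, A p q ≠ 0 := by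
    by_contra! h
    exact hA₀ (Matrix.ext h)
  have hqp : A q p = -A p q := congrFun₂ hA.transpose_eq_neg p q
  refine ⟨(of ![Pi.single p 1, Pi.single q (A p q)⁻¹])ᵀ, ?_⟩
  ext b c
  rw [Matrix.mul_assoc]
  change _ ⬝ᵥ A *ᵥ _ = _
  fin_cases b <;> fin_cases c <;> simp [hA.apply_self, hqp, hpq]

lemma exists_transpose_mul_mul_eq_symplecticMatrix_succ {A : Matrix ι ι K}
    (hA : IsAlternating A) {r : ℕ} {Q : Matrix ι (Fin r × Fin 2) K}
    (hQ : Qᵀ * A * Q = symplecticMatrix K r)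
    (hne : (Qᵀ * A)ᵀ * symplecticMatrix K r * (Qᵀ * A) ≠ A) :
    ∃ Q' : Matrix ι (Fin (r + 1) × Fin 2) K, Q'ᵀ * A * Q' = symplecticMatrix K (r + 1) := by
  obtain ⟨S, hQS, hSS⟩ := exists_mul_mul_eq_self_sub hA.transpose_eq_neg hQ
  obtain ⟨E, hE⟩ := (hA.transpose_mul_mul S).exists_hyperbolic_pair
    (by rw [hSS]; exact sub_ne_zero.mpr hne.symm)
  set X := S * E
  have hXX : Xᵀ * A * X = !![0, 1; -1, 0] := by
    rw [← hE, transpose_mul]; simp only [Matrix.mul_assoc, X]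
  have hQX : Qᵀ * A * X = 0 := by rw [← Matrix.mul_assoc, hQS, Matrix.zero_mul]
  have hXQ : Xᵀ * A * Q = 0 := by
    have := congrArg transpose hQX
    simpa [transpose_mul, hA.transpose_eq_neg, Matrix.mul_assoc] using this
  refine ⟨of fun i p => Fin.cases (X i p.2) (fun a => Q i (a, p.2)) p.1, ?_⟩
  ext ⟨i, b⟩ ⟨j, c⟩
  cases i using Fin.cases <;> cases j using Fin.cases
  · exact (congrFun₂ hXX b c).trans (by simp [symplecticMatrix_apply])
  · exact (congrFun₂ hXQ b (_, c)).trans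
      (by simp [symplecticMatrix_apply, (Fin.succ_ne_zero _).symm])
  · exact (congrFun₂ hQX (_, b) c).trans (by simp [symplecticMatrix_apply])
  · exact (congrFun₂ hQ (_, b) (_, c)).trans (by simp [symplecticMatrix_apply])

theorem exists_symplectic_normal_form {A : Matrix ι ι K} (hA : IsAlternating A) :
    ∃ (r : ℕ) (Q : Matrix ι (Fin r × Fin 2) K) (P : Matrix (Fin r × Fin 2) ι K),
      Qᵀ * A * Q = symplecticMatrix K r ∧ Pᵀ * symplecticMatrix K r * P = A := by
  by_contra! h
  have hQ (r : ℕ) : ∃ Q : Matrix ι (Fin r × Fin 2) K, Qᵀ * A * Q = symplecticMatrix K r := by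
    induction r with
    | zero => exact ⟨0, Subsingleton.elim _ _⟩
    | succ r ih =>
      obtain ⟨Q, hQ⟩ := ih
      exact hA.exists_transpose_mul_mul_eq_symplecticMatrix_succ hQ (h r Q _ hQ)
  obtain ⟨Q, hQ⟩ := hQ (Fintype.card ι + 1)
  have hrank : 2 * (Fintype.card ι + 1) ≤ Fintype.card ι := calc
    _ = (Qᵀ * A * Q).rank := by rw [hQ, rank_symplecticMatrix]
    _ ≤ Q.rank := rank_mul_le_right _ _
    _ ≤ Fintype.card ι := rank_le_card_height Q
  omega

end IsAlternating

lemma rank_eq_of_symplectic_normal_form {A : Matrix ι ι K} {r : ℕ}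
    {Q : Matrix ι (Fin r × Fin 2) K} {P : Matrix (Fin r × Fin 2) ι K}
    (hQ : Qᵀ * A * Q = symplecticMatrix K r) (hP : Pᵀ * symplecticMatrix K r * P = A) :
    A.rank = 2 * r := by
  rw [← rank_symplecticMatrix K r]
  apply le_antisymm
  · rw [← hP]
    exact (rank_mul_le_left _ _).trans (rank_mul_le_right _ _)
  · rw [← hQ]
    exact (rank_mul_le_left _ _).trans (rank_mul_le_right _ _)

end NormalForm

lemma exists_pfaffian_submatrix_ne_zero {R : Type*} [CommRing R] [Nontrivial R] {ι : Type*}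
    [Fintype ι] [LinearOrder ι] {A : Matrix ι ι R} (hA : IsAlternating A) {k r : ℕ} (hkr : k ≤ r)
    {Q : Matrix ι (Fin r × Fin 2) R} (hQ : Qᵀ * A * Q = symplecticMatrix R r) :
    ∃ f : Fin (2 * k) ↪o ι, pfaffian (A.submatrix f f) ≠ 0 := by
  set c := Prod.map (Fin.castLE hkr) id ∘ (pairEquiv k).symm
  have hc : (Q.submatrix id c)ᵀ * A * Q.submatrix id c =
      (symplecticMatrix R k).submatrix (pairEquiv k).symm (pairEquiv k).symm := by
    rw [← symplecticMatrix_submatrix_prodMap R (Fin.castLE_injective hkr), ← hQ]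
    rfl
  have hpf := pfaffian_symplecticMatrix R (n := k)
  rw [← hc, pfaffian_transpose_mul_mul hA] at hpf
  obtain ⟨f, -, hf⟩ := Finset.exists_ne_zero_of_sum_ne_zero (hpf.trans_ne one_ne_zero)
  exact ⟨f, right_ne_zero_of_mul hf⟩

theorem stmt4_general {K : Type*} [Field K] {ι : Type*} [Fintype ι] [LinearOrder ι] {k : ℕ}
    (A : Matrix ι ι K) (hA : IsAlternating A) :
    A.rank < 2 * k ↔
      ∀ f : Fin (2 * k) → ι, StrictMono f → pfaffian (A.submatrix f f) = 0 := by
  obtain ⟨r, Q, P, hQ, hP⟩ := hA.exists_symplectic_normal_form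
  have hrank : A.rank = 2 * r := rank_eq_of_symplectic_normal_form hQ hP
  constructor
  · intro hlt f _
    have hf : A.submatrix f f = (P.submatrix id f)ᵀ * symplecticMatrix K r * P.submatrix id f := by
      rw [← hP]; rfl
    rw [hf]
    exact pfaffian_transpose_mul_mul_eq_zero_of_card_lt
      (isAlternating_symplecticMatrix K r) _ (by simpa [mul_comm, hrank] using hlt)
  · intro hpf
    by_contra! hle
    obtain ⟨f, hf⟩ := exists_pfaffian_submatrix_ne_zero hA (by omega : k ≤ r) hQ
    exact hf (hpf f f.strictMono)

theorem stmt4 {K : Type*} [Field K] [CharZero K] {n k : ℕ}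
    (A : Matrix (Fin n) (Fin n) K) (hA : Aᵀ = -A) :
    A.rank < 2 * k ↔
      ∀ f : Fin (2 * k) → Fin n, StrictMono f → pfaffian (A.submatrix f f) = 0 :=
  stmt4_general A (isAlternating_of_transpose_eq_neg hA)
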